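/- Let (A, ≺_ω, ≻_ω, Ω) be a pre-anti-flexible family algebra. Define, for each ω ∈ Ω and x, y ∈ A, x ◁_ω y := x ≺_ω y − y ≻_ω x. Then (A, ◁_ω, Ω) is a right pre-Lie family algebra, i.e. x ◁_{αβ} (y ◁_β z) − (x ◁_α y) ◁_β z = x ◁_{βα} (z ◁_α y) − (x ◁_β z) ◁_α y for all x, y, z ∈ A and α, β ∈ Ω. -/

import Mathlib

/-!
A pair of products `≺`, `≻` has three associators: a mixed one, one for `≻` and one for `≺`.
Antisymmetrizing the associator `x ◁ (y ◁ z) - (x ◁ y) ◁ z` in `y` and `z`, with their indices,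
leaves a combination of three differences of these associators, each of which vanishes by one of the
two pre-anti-flexible identities. Grouping the terms `x ≺ (y ≺ z)` and `x ≺ (y ≻ z)` requires the
indices `αβ` and `βα` to agree.
-/

section FamilyProducts

variable {R Ω A : Type*} [CommSemiring R] [AddCommGroup A] [Module R A]

/-- The associator `x ◁_{αβ} (y ◁_β z) - (x ◁_α y) ◁_β z` of a family of bilinear products, used to
state the right pre-Lie identity. Its sign is opposite to that of Mathlib's `associator`. -/
def familyAssociator [Mul Ω] (tril : Ω → A →ₗ[R] A →ₗ[R] A) (α β : Ω) (x y z : A) : A :=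
  tril (α * β) x (tril β y z) - tril β (tril α x y) z

/-- A right pre-Lie family: the associator is invariant under exchanging its last two arguments
together with the two indices. -/
def IsRightPreLieFamily [Mul Ω] (tril : Ω → A →ₗ[R] A →ₗ[R] A) : Prop :=
  ∀ (α β : Ω) (x y z : A), familyAssociator tril α β x y z = familyAssociator tril β α x z y

/-- The mixed associator `(x ≻_α y) ≺_β z - x ≻_α (y ≺_β z)`, whose symmetry is the first
pre-anti-flexible identity. -/
def mixedFamilyAssociator (prec succ : Ω → A →ₗ[R] A →ₗ[R] A) (α β : Ω) (x y z : A) : A :=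
  prec β (succ α x y) z - succ α x (prec β y z)

/-- The associator `(x ≻_α y + x ≺_β y) ≻_{αβ} z - x ≻_α (y ≻_β z)`, one side of the second
pre-anti-flexible identity. -/
def succFamilyAssociator [Mul Ω] (prec succ : Ω → A →ₗ[R] A →ₗ[R] A) (α β : Ω) (x y z : A) : A :=
  succ (α * β) (succ α x y + prec β x y) z - succ α x (succ β y z)

/-- The associator `(x ≺_α y) ≺_β z - x ≺_{αβ} (y ≻_α z + y ≺_β z)`, which the second
pre-anti-flexible identity compares with `succFamilyAssociator`. -/
def precFamilyAssociator [Mul Ω] (prec succ : Ω → A →ₗ[R] A →ₗ[R] A) (α β : Ω) (x y z : A) : A :=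
  prec β (prec α x y) z - prec (α * β) x (succ α y z + prec β y z)

/-- The axioms of a pre-anti-flexible family algebra with products `≺ = prec` and `≻ = succ`:
reversing the arguments and exchanging the indices fixes the mixed associator and turns the
`≻`-associator into the `≺`-associator. -/
structure IsPreAntiFlexibleFamily [Mul Ω] (prec succ : Ω → A →ₗ[R] A →ₗ[R] A) : Prop where
  mixed_reverse : ∀ (α β : Ω) (x y z : A),
    mixedFamilyAssociator prec succ α β x y z = mixedFamilyAssociator prec succ β α z y x
  succ_reverse : ∀ (α β : Ω) (x y z : A),
    succFamilyAssociator prec succ α β x y z = precFamilyAssociator prec succ β α z y x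

/-- The family of products `x ◁_ω y = x ≺_ω y - y ≻_ω x`, bundled as bilinear maps. -/
def precSubSuccFlip (prec succ : Ω → A →ₗ[R] A →ₗ[R] A) (ω : Ω) : A →ₗ[R] A →ₗ[R] A :=
  prec ω - (succ ω).flip

theorem precSubSuccFlip_apply (prec succ : Ω → A →ₗ[R] A →ₗ[R] A) (ω : Ω) (x y : A) :
    precSubSuccFlip prec succ ω x y = prec ω x y - succ ω y x :=
  rfl

theorem familyAssociator_precSubSuccFlip_sub_swap [CommMagma Ω]
    (prec succ : Ω → A →ₗ[R] A →ₗ[R] A) (α β : Ω) (x y z : A) :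
    familyAssociator (precSubSuccFlip prec succ) α β x y z -
        familyAssociator (precSubSuccFlip prec succ) β α x z y =
      (mixedFamilyAssociator prec succ α β y x z - mixedFamilyAssociator prec succ β α z x y) +
        (succFamilyAssociator prec succ β α z y x - precFamilyAssociator prec succ α β x y z) -
        (succFamilyAssociator prec succ α β y z x - precFamilyAssociator prec succ β α x z y) := by
  simp only [familyAssociator, mixedFamilyAssociator, succFamilyAssociator, precFamilyAssociator,
    precSubSuccFlip_apply, mul_comm β α, map_add, map_sub, LinearMap.add_apply,
    LinearMap.sub_apply]
  abel

theorem preAntiFlexibleFamily_to_rightPreLieFamily_general [CommMagma Ω]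
    {prec succ : Ω → A →ₗ[R] A →ₗ[R] A} (h : IsPreAntiFlexibleFamily prec succ) :
    IsRightPreLieFamily (precSubSuccFlip prec succ) := by
  intro α β x y z
  rw [← sub_eq_zero, familyAssociator_precSubSuccFlip_sub_swap,
    h.mixed_reverse α β y x z, h.succ_reverse β α z y x, h.succ_reverse α β y z x]
  simp only [sub_self, add_zero]

end FamilyProducts

/-- `x ◁_ω y := x ≺_ω y − y ≻_ω x` turns a pre-anti-flexible family
algebra into a right pre-Lie family algebra. -/
theorem preAntiFlexibleFamily_to_rightPreLieFamily
    (k : Type*) [Field k] (Ω : Type*) [CommSemigroup Ω]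
    (A : Type*) [AddCommGroup A] [Module k A]
    (prec succ : Ω → A →ₗ[k] A →ₗ[k] A)
    (h1 : ∀ (α β : Ω) (x y z : A),
      prec β (succ α x y) z - succ α x (prec β y z) =
        prec α (succ β z y) x - succ β z (prec α y x))
    (h2 : ∀ (α β : Ω) (x y z : A),
      succ (α * β) (succ α x y + prec β x y) z - succ α x (succ β y z) =
        prec α (prec β z y) x - prec (β * α) z (succ β y x + prec α y x))
    (tril : Ω → A → A → A)
    (htril : ∀ (ω : Ω) (x y : A), tril ω x y = prec ω x y - succ ω y x) :
    ∀ (α β : Ω) (x y z : A),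
      tril (α * β) x (tril β y z) - tril β (tril α x y) z =
        tril (β * α) x (tril α z y) - tril α (tril β x z) y := by
  simp only [htril]
  exact preAntiFlexibleFamily_to_rightPreLieFamily_general ⟨h1, h2⟩
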